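/- For every finite poset P and every ideal I ≠ P, the flip graph 𝓕³(P) on the ideals of P, where two ideals are adjacent if their symmetric difference has size at most 3, contains a Hamiltonian path from I to the full ideal P. Symmetrically, for every ideal I ≠ ∅ there is a Hamiltonian path in 𝓕³(P) from I to the empty ideal. -/

import Mathlib

open Finset

/-- One step of length at most one inside `S`. -/
def HStep {V : Type*} (d : V → V → ℕ) (S : Finset V) (x y : V) : Prop :=
  x ∈ S ∧ y ∈ S ∧ d x y ≤ 1

/-- `S` is connected with respect to steps of length at most one. -/
def HConn {V : Type*} (d : V → V → ℕ) (S : Finset V) : Prop :=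
  ∀ x ∈ S, ∀ y ∈ S, Relation.ReflTransGen (HStep d S) x y

/-- A Hamiltonian path of `S` from `u` to `v` with jumps of length at most three. -/
def HPath {V : Type*} (d : V → V → ℕ) (S : Finset V) (u v : V) : Prop :=
  ∃ L : List V, L.Nodup ∧ (∀ x, x ∈ L ↔ x ∈ S) ∧ List.IsChain (fun a b => d a b ≤ 3) L ∧
    L.head? = some u ∧ L.getLast? = some v

theorem HPath.rev {V : Type*} {d : V → V → ℕ} (hs : ∀ x y, d x y = d y x) {S : Finset V}
    {u v : V} (h : HPath d S u v) : HPath d S v u := by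
  obtain ⟨L, h1, h2, h3, h4, h5⟩ := h
  refine ⟨L.reverse, by simpa using h1, by simpa using h2, ?_, by simpa using h5,
    by simpa using h4⟩
  rw [List.isChain_reverse]
  refine h3.imp ?_
  intro a b hab
  simpa [hs b a] using hab

theorem HPath.mem_right {V : Type*} {d : V → V → ℕ} {S : Finset V}
    {u v : V} (h : HPath d S u v) : v ∈ S := by
  obtain ⟨L, h1, h2, h3, h4, h5⟩ := h
  exact (h2 v).1 (List.mem_of_getLast? h5)

theorem HPath.append {V : Type*} [DecidableEq V] {d : V → V → ℕ} {S A B : Finset V}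
    {u u' w v : V} (hB : HPath d B u u') (hA : HPath d A w v) (hd : d u' w ≤ 3)
    (hdis : Disjoint B A) (hS : B ∪ A = S) : HPath d S u v := by
  obtain ⟨L, h1, h2, h3, h4, h5⟩ := hB
  obtain ⟨M, k1, k2, k3, k4, k5⟩ := hA
  refine ⟨L ++ M, ?_, ?_, ?_, ?_, ?_⟩
  · rw [List.nodup_append]
    refine ⟨h1, k1, ?_⟩
    intro a ha b hb hab
    subst hab
    exact Finset.disjoint_left.1 hdis ((h2 a).1 ha) ((k2 a).1 hb)
  · intro x
    rw [List.mem_append, h2, k2, ← hS, Finset.mem_union]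
  · rw [List.isChain_append]
    refine ⟨h3, k3, ?_⟩
    intro x hx y hy
    rw [h5] at hx
    rw [k4] at hy
    simp only [Option.mem_def, Option.some.injEq] at hx hy
    subst hx hy
    exact hd
  · simp [List.head?_append, h4]
  · simp [List.getLast?_append, k5]

/-- Sekanina's theorem: the cube of a connected graph is Hamilton-connected. -/
theorem sekanina {V : Type*} [DecidableEq V] (d : V → V → ℕ) (hs : ∀ x y, d x y = d y x)
    (h0 : ∀ x, d x x = 0) (ht : ∀ x y z, d x z ≤ d x y + d y z) (n : ℕ) :
    ∀ S : Finset V, S.card ≤ n → HConn d S → ∀ u ∈ S, ∀ v ∈ S, u ≠ v → HPath d S u v := by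
  classical
  induction n with
  | zero =>
    intro S hS _ u hu
    have : S = ∅ := Finset.card_eq_zero.1 (by omega)
    simp [this] at hu
  | succ n ih =>
    have R : ∀ S : Finset V, S.card ≤ n → HConn d S → ∀ u ∈ S,
        ∃ u', d u u' ≤ 1 ∧ HPath d S u u' := by
      intro S hS hc u hu
      by_cases hex : ∃ u' ∈ S, u' ≠ u ∧ d u u' ≤ 1
      · obtain ⟨u', h1, h2, h3⟩ := hex
        exact ⟨u', h3, ih S hS hc u hu u' h1 h2.symm⟩
      · have hall : ∀ x, x ∈ S ↔ x = u := by
          intro x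
          refine ⟨fun hx => ?_, fun hx => hx ▸ hu⟩
          have := hc u hu x hx
          clear hx
          induction this with
          | refl => rfl
          | tail _ hyz ihy =>
            subst ihy
            by_contra hne
            exact hex ⟨_, hyz.2.1, hne, hyz.2.2⟩
        refine ⟨u, by simp [h0], [u], by simp, ?_, by simp, by simp, by simp⟩
        intro x
        simp [hall]
    intro S hS hc u hu v hv huv
    set A := S.filter (fun x => Relation.ReflTransGen (HStep d (S.erase u)) v x) with hA
    have hvA : v ∈ A := by
      rw [hA, Finset.mem_filter]
      exact ⟨hv, Relation.ReflTransGen.refl⟩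
    have hAS : A ⊆ S := Finset.filter_subset _ _
    have hAu : u ∉ A := by
      intro h
      have h2 := (Finset.mem_filter.1 h).2
      rcases Relation.ReflTransGen.cases_tail h2 with h3 | ⟨y, _, h3⟩
      · exact huv h3
      · simpa using h3.2.1
    have hstep : ∀ y ∈ A, ∀ z, HStep d S y z → z ≠ u → z ∈ A := by
      intro y hy z hyz hz
      have hyu : y ≠ u := fun h => hAu (h ▸ hy)
      rw [hA, Finset.mem_filter]
      refine ⟨hyz.2.1, (Finset.mem_filter.1 hy).2.tail ⟨?_, ?_, hyz.2.2⟩⟩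
      · exact Finset.mem_erase.2 ⟨hyu, hyz.1⟩
      · exact Finset.mem_erase.2 ⟨hz, hyz.2.1⟩
    have hsymm : ∀ T : Finset V, Std.Symm (HStep d T) := by
      refine fun T => ⟨fun x y h => ?_⟩
      exact ⟨h.2.1, h.1, by rw [hs]; exact h.2.2⟩
    have hconn : ∀ T : Finset V, ∀ c, (∀ x ∈ T, Relation.ReflTransGen (HStep d T) c x) →
        HConn d T := by
      intro T c h x hx y hy
      exact ((@Relation.ReflTransGen.stdSymm _ _ (hsymm T)).symm _ _ (h x hx)).trans (h y hy)
    have hcA : HConn d A := by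
      refine hconn A v ?_
      intro x hx
      have h2 := (Finset.mem_filter.1 hx).2
      have : x ∈ A ∧ Relation.ReflTransGen (HStep d A) v x := by
        clear hx
        induction h2 with
        | refl => exact ⟨hvA, Relation.ReflTransGen.refl⟩
        | tail _ hyz ihy =>
          have hz := hstep _ ihy.1 _ ⟨Finset.mem_of_mem_erase hyz.1,
            Finset.mem_of_mem_erase hyz.2.1, hyz.2.2⟩ (Finset.ne_of_mem_erase hyz.2.1)
          exact ⟨hz, ihy.2.tail ⟨ihy.1, hz, hyz.2.2⟩⟩
      exact this.2
    have huB : u ∈ S \ A := Finset.mem_sdiff.2 ⟨hu, hAu⟩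
    have hcB : HConn d (S \ A) := by
      refine hconn _ u ?_
      intro x hx
      have h2 := hc u hu x (Finset.mem_sdiff.1 hx).1
      have : x ∈ A ∨ (x ∈ S \ A ∧ Relation.ReflTransGen (HStep d (S \ A)) u x) := by
        clear hx
        induction h2 with
        | refl => exact Or.inr ⟨huB, Relation.ReflTransGen.refl⟩
        | @tail y z _ hyz ihy =>
          by_cases hzu : z = u
          · subst hzu
            exact Or.inr ⟨huB, Relation.ReflTransGen.refl⟩
          rcases ihy with hy | ⟨hy, hp⟩
          · exact Or.inl (hstep _ hy _ hyz hzu)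
          · by_cases hz : z ∈ A
            · exact Or.inl hz
            · have hz' : z ∈ S \ A := Finset.mem_sdiff.2 ⟨hyz.2.1, hz⟩
              exact Or.inr ⟨hz', hp.tail ⟨hy, hz', hyz.2.2⟩⟩
      rcases this with h | h
      · exact absurd h (Finset.mem_sdiff.1 hx).2
      · exact h.2
    have hw : ∃ w ∈ A, d u w ≤ 1 := by
      have h2 := hc v hv u hu
      have : ∀ x, Relation.ReflTransGen (HStep d S) v x → (∃ w ∈ A, d u w ≤ 1) ∨ x ∈ A := by
        intro x hx
        induction hx with
        | refl => exact Or.inr hvA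
        | @tail y z _ hyz ihy =>
          rcases ihy with h | hy
          · exact Or.inl h
          · by_cases hzu : z = u
            · subst hzu
              exact Or.inl ⟨y, hy, by rw [hs]; exact hyz.2.2⟩
            · exact Or.inr (hstep _ hy _ hyz hzu)
      exact (this u h2).resolve_right hAu
    have hcardA : A.card ≤ n := by
      have := Finset.card_lt_card (Finset.ssubset_iff_subset_ne.2
        ⟨hAS, fun h => hAu (h ▸ hu)⟩)
      omega
    have hcardB : (S \ A).card ≤ n := by
      have := Finset.card_lt_card (Finset.ssubset_iff_subset_ne.2
        ⟨(Finset.sdiff_subset : S \ A ⊆ S), fun h => by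
          have : v ∈ S \ A := by rw [h]; exact hv
          exact (Finset.mem_sdiff.1 this).2 hvA⟩)
      omega
    obtain ⟨u', hu', hpB⟩ := R _ hcardB hcB u huB
    obtain ⟨w, hwA, huw⟩ := hw
    have hU : S \ A ∪ A = S := Finset.sdiff_union_of_subset hAS
    have hD : Disjoint (S \ A) A := Finset.sdiff_disjoint
    have t1 := ht u' u w
    rw [hs u' u] at t1
    by_cases hwv : w = v
    · subst hwv
      obtain ⟨v', hv', hpA⟩ := R _ hcardA hcA w hvA
      have t2 := ht u' w v'
      exact hpB.append (hpA.rev hs) (by omega) hD hU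
    · exact hpB.append (ih A hcardA hcA w hwA v hvA hwv) (by omega) hD hU

/-- Any two distinct ideals are joined by a Hamiltonian path. -/
theorem ideals_hamilton (α : Type*) [Fintype α] [PartialOrder α] [DecidableEq α]
    (I K : Finset α) (hI : ∀ u ∈ I, ∀ v, v ≤ u → v ∈ I)
    (hK : ∀ u ∈ K, ∀ v, v ≤ u → v ∈ K) (hIK : I ≠ K) :
    ∃ L : List (Finset α), L.Nodup ∧
        (∀ J : Finset α, J ∈ L ↔ ∀ u ∈ J, ∀ v, v ≤ u → v ∈ J) ∧
        List.IsChain (fun A B => (symmDiff A B).card ≤ 3) L ∧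
        L.head? = some I ∧ L.getLast? = some K := by
  classical
  set S : Finset (Finset α) := Finset.univ.filter (fun J => ∀ u ∈ J, ∀ v, v ≤ u → v ∈ J)
    with hS
  have hmem : ∀ J, J ∈ S ↔ ∀ u ∈ J, ∀ v, v ≤ u → v ∈ J := by
    intro J
    rw [hS, Finset.mem_filter]
    simp only [Finset.mem_univ, true_and]
  let d : Finset α → Finset α → ℕ := fun A B => (symmDiff A B).card
  have hs : ∀ x y, d x y = d y x := fun x y => by simp only [d, symmDiff_comm]
  have hemp : (∅ : Finset α) ∈ S := by rw [hmem]; simp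
  have hreach : ∀ n : ℕ, ∀ J ∈ S, J.card = n → Relation.ReflTransGen (HStep d S) ∅ J := by
    intro n
    induction n with
    | zero =>
      intro J _ h
      rw [Finset.card_eq_zero.1 h]
    | succ n ih =>
      intro J hJ h
      have hne : J.Nonempty := Finset.card_pos.1 (by omega)
      obtain ⟨m, hm⟩ := J.exists_maximal hne
      have hJ' : J.erase m ∈ S := by
        rw [hmem]
        intro a ha b hb
        have haJ := Finset.mem_of_mem_erase ha
        refine Finset.mem_erase.2 ⟨?_, (hmem J).1 hJ a haJ b hb⟩
        rintro rfl
        exact Finset.ne_of_mem_erase ha (le_antisymm (hm.2 haJ hb) hb)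
      refine (ih _ hJ' (by rw [Finset.card_erase_of_mem hm.1]; omega)).tail ⟨hJ', hJ, ?_⟩
      have hsub : symmDiff (J.erase m) J ⊆ {m} := by
        intro x hx
        rw [Finset.mem_symmDiff] at hx
        simp only [Finset.mem_erase] at hx
        rw [Finset.mem_singleton]
        tauto
      simpa [d] using Finset.card_le_card hsub
  have hc : HConn d S := by
    intro x hx y hy
    have hsym : Std.Symm (HStep d S) :=
      ⟨fun a b h => ⟨h.2.1, h.1, by rw [hs]; exact h.2.2⟩⟩
    exact ((@Relation.ReflTransGen.stdSymm _ _ hsym).symm _ _ (hreach _ x hx rfl)).trans (hreach _ y hy rfl)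
  have ht : ∀ x y z, d x z ≤ d x y + d y z := by
    intro x y z
    exact (Finset.card_le_card (symmDiff_triangle x y z)).trans (Finset.card_union_le _ _)
  obtain ⟨L, h1, h2, h3, h4, h5⟩ := sekanina d hs (fun x => by simp [d]) ht S.card S le_rfl hc I
    ((hmem I).2 hI) K ((hmem K).2 hK) hIK
  exact ⟨L, h1, fun J => (h2 J).trans (hmem J), h3, h4, h5⟩



/-- For every finite poset `P`: for every ideal `I ≠ P` the flip graph `𝓕³(P)` on the
ideals of `P` (two ideals adjacent iff they differ in at most three elements) contains a
Hamiltonian path from `I` to the full ideal `P`; symmetrically, for every ideal `I ≠ ∅`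
it contains a Hamiltonian path from `I` to the empty ideal. A Hamiltonian path is
modeled as a list visiting every ideal exactly once, with consecutive entries differing
in at most three elements. -/
theorem stmt_19 (α : Type*) [Fintype α] [PartialOrder α] [DecidableEq α] :
    (∀ I : Finset α, (∀ u ∈ I, ∀ v, v ≤ u → v ∈ I) → I ≠ Finset.univ →
      ∃ L : List (Finset α), L.Nodup ∧
        (∀ J : Finset α, J ∈ L ↔ ∀ u ∈ J, ∀ v, v ≤ u → v ∈ J) ∧
        List.Chain' (fun A B => (symmDiff A B).card ≤ 3) L ∧
        L.head? = some I ∧ L.getLast? = some Finset.univ) ∧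
    (∀ I : Finset α, (∀ u ∈ I, ∀ v, v ≤ u → v ∈ I) → I ≠ ∅ →
      ∃ L : List (Finset α), L.Nodup ∧
        (∀ J : Finset α, J ∈ L ↔ ∀ u ∈ J, ∀ v, v ≤ u → v ∈ J) ∧
        List.Chain' (fun A B => (symmDiff A B).card ≤ 3) L ∧
        L.head? = some I ∧ L.getLast? = some ∅) := by
  refine ⟨fun I hI hne => ?_, fun I hI hne => ?_⟩
  · exact ideals_hamilton α I Finset.univ hI (by simp) hne
  · exact ideals_hamilton α I ∅ hI (by simp) hne
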